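/- Let M ⊆ B(H) be a von Neumann algebra, let (X, Σ) be a measurable space, let A be a POV measure on (X, Σ) with A(S) ∈ M' for every S ∈ Σ, and let Φ : B(H) → B(H) be a unital completely positive linear map with Φ ∘ Φ = Φ and range equal to M. Then the map ℰ defined by ℰ[S](B) := Φ(B) A(S) is a CP instrument on B(H): for each B the map S ↦ ℰ[S](B) is countably additive in the weak operator topology, and for each S the map B ↦ ℰ[S](B) is completely positive with ℰ[S](I) ≤ I. Moreover ℰ is compatible with A (i.e., ℰ[S](I) = A(S) for all S ∈ Σ) and ℰ is local to M' (i.e., ℰ[S](B) = ℰ[S](I)·B for all B ∈ M'' = M and all S ∈ Σ). -/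

import Mathlib

open scoped InnerProductSpace ComplexOrder

noncomputable section

variable {H : Type*} [NormedAddCommGroup H] [InnerProductSpace ℂ H] [CompleteSpace H]

/-- Positivity of an `n × n` matrix of operators on `H`, expressed as positivity of the
corresponding operator on the `n`-fold Hilbert sum `H^n`. -/
def OpMatrixNonneg {n : ℕ} (M : Matrix (Fin n) (Fin n) (H →L[ℂ] H)) : Prop :=
  ∀ v : Fin n → H, 0 ≤ ∑ i, ∑ j, ⟪v i, M i j (v j)⟫_ℂ

/-- A map `Φ : B(H) → B(H)` is completely positive if it is (complex) linear and its
entrywise application to positive matrices over `B(H)` preserves positivity. -/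
def IsCompletelyPositiveMap (Φ : (H →L[ℂ] H) → (H →L[ℂ] H)) : Prop :=
  IsLinearMap ℂ Φ ∧ ∀ (n : ℕ) (M : Matrix (Fin n) (Fin n) (H →L[ℂ] H)),
    OpMatrixNonneg M → OpMatrixNonneg (M.map Φ)

/-- A positive-operator-valued measure on a measurable space `(X, Σ)`:
`0 ≤ A S ≤ I` for every `S ∈ Σ`, and `A` is countably additive in the weak operator
topology. -/
def IsPOVMeasure {X : Type*} [MeasurableSpace X] (A : Set X → (H →L[ℂ] H)) : Prop :=
  (∀ S : Set X, MeasurableSet S → 0 ≤ A S ∧ A S ≤ 1) ∧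
  ∀ f : ℕ → Set X, (∀ n, MeasurableSet (f n)) → Pairwise (Function.onFun Disjoint f) →
    ∀ y z : H, HasSum (fun n => ⟪y, A (f n) z⟫_ℂ) ⟪y, A (⋃ n, f n) z⟫_ℂ

/-- A completely positive instrument on `B(H)` over `(X, Σ)`: for fixed `B` it is countably
additive in the weak operator topology, and for fixed `S ∈ Σ` it is a completely positive
map with `ℰ[S](I) ≤ I`. -/
def IsCPInstrument {X : Type*} [MeasurableSpace X]
    (ℰ : Set X → (H →L[ℂ] H) → (H →L[ℂ] H)) : Prop :=
  (∀ B : H →L[ℂ] H, ∀ f : ℕ → Set X, (∀ n, MeasurableSet (f n)) →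
      Pairwise (Function.onFun Disjoint f) →
      ∀ y z : H, HasSum (fun n => ⟪y, ℰ (f n) B z⟫_ℂ) ⟪y, ℰ (⋃ n, f n) B z⟫_ℂ) ∧
  ∀ S : Set X, MeasurableSet S → IsCompletelyPositiveMap (ℰ S) ∧ ℰ S 1 ≤ 1

/-- An instrument is local to an algebra `A ⊆ B(H)` if `ℰ[S](B) = ℰ[S](I)·B` for all `B`
in the commutant `A'` and all `S ∈ Σ`. -/
def InstrumentLocalTo {X : Type*} [MeasurableSpace X]
    (ℰ : Set X → (H →L[ℂ] H) → (H →L[ℂ] H)) (A : Set (H →L[ℂ] H)) : Prop :=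
  ∀ S : Set X, MeasurableSet S → ∀ B ∈ Set.centralizer A, ℰ S B = ℰ S 1 * B

/-!
The one real point is complete positivity of `B ↦ Φ B * A S`. Since `A S` is positive and commutes
with the range of `Φ`, so does `√(A S)`, and hence `Φ B * A S = √(A S) * Φ B * √(A S)` is the
composition of `Φ` with a conjugation.
-/

theorem star_sqrt_mul_mul_sqrt_of_commute {𝓐 : Type*} [NonUnitalCStarAlgebra 𝓐] [PartialOrder 𝓐]
    [StarOrderedRing 𝓐] {a b : 𝓐} (hab : Commute a b) (hb : 0 ≤ b) :
    star (CFC.sqrt b) * a * CFC.sqrt b = a * b := by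
  have hsa : star (CFC.sqrt b) = CFC.sqrt b := (CFC.sqrt_nonneg b).isSelfAdjoint.star_eq
  have hcomm : Commute (CFC.sqrt b) a := hab.symm.cfcₙ_nnreal _
  rw [hsa, hcomm.eq, mul_assoc, CFC.sqrt_mul_sqrt_self b hb]

theorem mul_le_right_of_commute {𝓐 : Type*} [CStarAlgebra 𝓐] [PartialOrder 𝓐] [StarOrderedRing 𝓐]
    {a b : 𝓐} (hab : Commute a b) (ha : a ≤ 1) (hb : 0 ≤ b) : a * b ≤ b := by
  have hnonneg : 0 ≤ (1 - a) * b :=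
    Commute.mul_nonneg (sub_nonneg.2 ha) hb ((Commute.one_left b).sub_left hab)
  rwa [sub_mul, one_mul, sub_nonneg] at hnonneg

theorem hasSum_inner_mul_left {ι : Type*} {T : ι → H →L[ℂ] H} {T₀ : H →L[ℂ] H}
    (hT : ∀ y z : H, HasSum (fun i => ⟪y, T i z⟫_ℂ) ⟪y, T₀ z⟫_ℂ) (B : H →L[ℂ] H) (y z : H) :
    HasSum (fun i => ⟪y, (B * T i) z⟫_ℂ) ⟪y, (B * T₀) z⟫_ℂ := by
  simpa only [mul_apply_eq_comp, ContinuousLinearMap.adjoint_inner_left]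
    using hT (ContinuousLinearMap.adjoint B y) z

theorem OpMatrixNonneg.conj {n : ℕ} {N : Matrix (Fin n) (Fin n) (H →L[ℂ] H)}
    (hN : OpMatrixNonneg N) (C : H →L[ℂ] H) :
    OpMatrixNonneg (N.map fun T => star C * T * C) := by
  intro v
  simpa only [Matrix.map_apply, mul_apply_eq_comp, ContinuousLinearMap.star_eq_adjoint,
    ContinuousLinearMap.adjoint_inner_right] using hN fun i => C (v i)

namespace IsCompletelyPositiveMap

variable {Φ : (H →L[ℂ] H) → (H →L[ℂ] H)}

theorem conj (hΦ : IsCompletelyPositiveMap Φ) (C : H →L[ℂ] H) :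
    IsCompletelyPositiveMap fun B => star C * Φ B * C :=
  ⟨(LinearMap.mulLeftRight ℂ (star C, C) ∘ₗ hΦ.1.mk' Φ).isLinear,
    fun n N hN => (hΦ.2 n N hN).conj C⟩

theorem mul_right_of_commute (hΦ : IsCompletelyPositiveMap Φ) {a : H →L[ℂ] H} (ha : 0 ≤ a)
    (hcomm : ∀ B, Commute (Φ B) a) : IsCompletelyPositiveMap fun B => Φ B * a := by
  simpa only [star_sqrt_mul_mul_sqrt_of_commute (hcomm _) ha] using hΦ.conj (CFC.sqrt a)

end IsCompletelyPositiveMap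

section Instrument

variable {X : Type*} [MeasurableSpace X] {A : Set X → (H →L[ℂ] H)}
  {Φ : (H →L[ℂ] H) → (H →L[ℂ] H)}

theorem isCPInstrument_mul (hA : IsPOVMeasure A) (hΦ : IsCompletelyPositiveMap Φ) (hΦ1 : Φ 1 ≤ 1)
    (hcomm : ∀ S, MeasurableSet S → ∀ B, Commute (Φ B) (A S)) :
    IsCPInstrument fun S B => Φ B * A S := by
  refine ⟨fun B f hf hdisj => hasSum_inner_mul_left (hA.2 f hf hdisj) (Φ B), fun S hS => ?_⟩
  obtain ⟨hnonneg, hle_one⟩ := hA.1 S hS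
  exact ⟨hΦ.mul_right_of_commute hnonneg (hcomm S hS),
    (mul_le_right_of_commute (hcomm S hS 1) hΦ1 hnonneg).trans hle_one⟩

omit [CompleteSpace H] in
theorem instrumentLocalTo_mul {𝓑 : Set (H →L[ℂ] H)} (hA : ∀ S, MeasurableSet S → A S ∈ 𝓑)
    (hΦ : ∀ B ∈ 𝓑.centralizer, Φ B = B) : InstrumentLocalTo (fun S B => Φ B * A S) 𝓑 := by
  intro S hS B hB
  calc Φ B * A S = B * A S := by rw [hΦ B hB]
    _ = A S * B := (hB (A S) (hA S hS)).symm
    _ = Φ 1 * A S * B := by rw [hΦ 1 Set.one_mem_centralizer, one_mul]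

end Instrument

/-- **Tensoring a CP projection onto `M` with a POV measure in `M'` gives a CP instrument.**
Let `M` be a von Neumann algebra on `H`, `A` a POV measure with range in `M'`, and `Φ` a
unital CP idempotent on `B(H)` with range `M`.  Then `ℰ[S](B) := Φ(B) A(S)` is a CP
instrument that is compatible with `A` (`ℰ[S](I) = A(S)`) and local to `M'`
(`ℰ[S](B) = ℰ[S](I)·B` for `B ∈ M'' = M`). -/
theorem cp_projection_tensor_povm_is_instrument
    (M : VonNeumannAlgebra H) (X : Type*) [MeasurableSpace X]
    (A : Set X → (H →L[ℂ] H)) (hA : IsPOVMeasure A)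
    (hAcomm : ∀ S : Set X, MeasurableSet S → A S ∈ M.commutant)
    (Φ : (H →L[ℂ] H) → (H →L[ℂ] H))
    (hΦcp : IsCompletelyPositiveMap Φ) (hΦ1 : Φ 1 = 1) (hΦidem : Φ ∘ Φ = Φ)
    (hΦran : Set.range Φ = (M : Set (H →L[ℂ] H)))
    (ℰ : Set X → (H →L[ℂ] H) → (H →L[ℂ] H))
    (hℰ : ∀ (S : Set X) (B : H →L[ℂ] H), ℰ S B = Φ B * A S) :
    IsCPInstrument ℰ ∧
      (∀ S : Set X, MeasurableSet S → ℰ S 1 = A S) ∧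
      InstrumentLocalTo ℰ (M.commutant : Set (H →L[ℂ] H)) := by
  obtain rfl : ℰ = fun S B => Φ B * A S := funext₂ hℰ
  have hmem : ∀ B, Φ B ∈ M := Set.range_subset_iff.1 hΦran.subset
  have hcomm : ∀ S, MeasurableSet S → ∀ B, Commute (Φ B) (A S) := fun S hS B =>
    VonNeumannAlgebra.mem_commutant_iff.1 (hAcomm S hS) (Φ B) (hmem B)
  have hfix : ∀ B ∈ Set.centralizer (M.commutant : Set (H →L[ℂ] H)), Φ B = B := by
    rw [M.coe_commutant, M.centralizer_centralizer, ← hΦran]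
    exact Set.forall_mem_range.2 (congrFun hΦidem)
  refine ⟨isCPInstrument_mul hA hΦcp hΦ1.le hcomm, fun S _ => ?_,
    instrumentLocalTo_mul hAcomm hfix⟩
  change Φ 1 * A S = A S
  rw [hΦ1, one_mul]

end
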